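/- arXiv:1205.5754 — 6 statements merged into one kernel-verified Lean document; each statement's English description precedes it below -/
import Mathlib

section
/- Let σ : Fin 4 → Fin 4 → Matrix (Fin 4) (Fin 4) ℂ be a constant skew-symmetric family (σ α β = −(σ β α)), let m ≠ 0 be a real number, and let ψ, ψ̄ : ℝ⁴ → (Fin 4 → ℂ) be twice continuously differentiable (ψ a column-vector field, ψ̄ a row-vector field). Define F^μ(x) := (i/(2m)) · ( ψ̄(x) ⬝ (σ μ α) ⬝ ∂_α ψ(x) + ∂_α ψ̄(x) ⬝ (σ α μ) ⬝ ψ(x) ), summed over α, where u ⬝ M ⬝ v denotes the scalar ∑_{j,k} u j * M j k * v k. Then for every x, the divergence satisfies ∑_{β ∈ Fin 4} ∂_β F^β (x) = (i/m) · ∑_{α, β ∈ Fin 4} ∂_α ψ̄(x) ⬝ (σ α β) ⬝ ∂_β ψ(x). -/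
/-- Partial derivative of a function on ℝ⁴ in the μ-th coordinate direction. -/
noncomputable def pd {E : Type*} [NormedAddCommGroup E] [NormedSpace ℝ E]
    (μ : Fin 4) (f : (Fin 4 → ℝ) → E) : (Fin 4 → ℝ) → E :=
  fun x => fderiv ℝ f x (Pi.single μ 1)

/-- The scalar `u ⬝ M ⬝ v = ∑_{j,k} u j * M j k * v k`. -/
noncomputable def triple (u : Fin 4 → ℂ) (M : Matrix (Fin 4) (Fin 4) ℂ) (v : Fin 4 → ℂ) : ℂ :=
  ∑ j : Fin 4, ∑ k : Fin 4, u j * M j k * v k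

theorem triple_hasFD (u v : (Fin 4 → ℝ) → (Fin 4 → ℂ)) (M : Matrix (Fin 4) (Fin 4) ℂ)
    (x : Fin 4 → ℝ) (hu : DifferentiableAt ℝ u x) (hv : DifferentiableAt ℝ v x) :
    DifferentiableAt ℝ (fun y => triple (u y) M (v y)) x ∧
    ∀ β, pd β (fun y => triple (u y) M (v y)) x =
      triple (pd β u x) M (v x) + triple (u x) M (pd β v x) := by
  have hu' := fun j => (hasFDerivAt_pi'.1 hu.hasFDerivAt) j
  have hv' := fun j => (hasFDerivAt_pi'.1 hv.hasFDerivAt) j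
  have h : HasFDerivAt (fun y => triple (u y) M (v y)) _ x :=
    HasFDerivAt.fun_sum (u := Finset.univ) (fun j _ =>
      HasFDerivAt.fun_sum (u := Finset.univ) (fun k _ =>
        ((hu' j).mul_const (M j k)).mul (hv' k)))
  refine ⟨h.differentiableAt, fun β => ?_⟩
  unfold pd
  rw [h.fderiv]
  simp only [triple, ← Finset.sum_add_distrib, ContinuousLinearMap.sum_apply]
  refine Finset.sum_congr rfl fun j _ => Finset.sum_congr rfl fun k _ => ?_
  simp
  ring

theorem pd_diff (f : (Fin 4 → ℝ) → (Fin 4 → ℂ)) (hf : ContDiff ℝ 2 f) (α : Fin 4) :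
    Differentiable ℝ (pd α f) := by
  have h : ContDiff ℝ 1 (fderiv ℝ f) := hf.fderiv_right (by norm_num)
  exact (h.differentiable (by norm_num)).clm_apply (differentiable_const _)

theorem pd_comm (f : (Fin 4 → ℝ) → (Fin 4 → ℂ)) (hf : ContDiff ℝ 2 f) (α β : Fin 4)
    (x : Fin 4 → ℝ) : pd β (pd α f) x = pd α (pd β f) x := by
  have h : ContDiff ℝ 1 (fderiv ℝ f) := hf.fderiv_right (by norm_num)
  have hd : DifferentiableAt ℝ (fderiv ℝ f) x := h.differentiable (by norm_num) x
  have key : ∀ a b : Fin 4, pd b (pd a f) x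
      = fderiv ℝ (fderiv ℝ f) x (Pi.single b 1) (Pi.single a 1) := by
    intro a b
    have := (hd.hasFDerivAt.clm_apply (hasFDerivAt_const (Pi.single a (1:ℝ) : Fin 4 → ℝ) x)).fderiv
    unfold pd
    rw [this]
    simp
  rw [key, key]
  exact (hf.contDiffAt.isSymmSndFDerivAt (by simp)) _ _

theorem triple_neg_mid (u v : Fin 4 → ℂ) (M : Matrix (Fin 4) (Fin 4) ℂ) :
    triple u (-M) v = - triple u M v := by
  simp [triple]

theorem skew_sum (T : Fin 4 → Fin 4 → ℂ) (h : ∀ a b, T a b = - T b a) :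
    ∑ a, ∑ b, T a b = 0 := by
  have h1 : ∑ a, ∑ b, T a b = - ∑ a, ∑ b, T a b := by
    conv_lhs => rw [Finset.sum_comm]
    simp only [← Finset.sum_neg_distrib]
    exact Finset.sum_congr rfl fun a _ => Finset.sum_congr rfl fun b _ => h b a
  exact self_eq_neg.1 h1

/-- Divergence of the regularizing vector `F^μ` added to the Dirac Lagrangian:
`∂_β F^β = (i/m) ∂_α ψ̄ σ^{αβ} ∂_β ψ`. -/
theorem divergence_of_dirac_regularizing_vector
    (σ : Fin 4 → Fin 4 → Matrix (Fin 4) (Fin 4) ℂ)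
    (hσ : ∀ α β, σ α β = -(σ β α))
    (m : ℝ) (hm : m ≠ 0)
    (ψ ψb : (Fin 4 → ℝ) → (Fin 4 → ℂ))
    (hψ : ContDiff ℝ 2 ψ) (hψb : ContDiff ℝ 2 ψb)
    (F : Fin 4 → (Fin 4 → ℝ) → ℂ)
    (hF : ∀ μ x, F μ x = (Complex.I / (2 * (m : ℂ))) *
      ∑ α : Fin 4, (triple (ψb x) (σ μ α) (pd α ψ x) +
                    triple (pd α ψb x) (σ α μ) (ψ x)))
    (x : Fin 4 → ℝ) :
    ∑ β : Fin 4, pd β (F β) x =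
      (Complex.I / (m : ℂ)) *
        ∑ α : Fin 4, ∑ β : Fin 4, triple (pd α ψb x) (σ α β) (pd β ψ x) := by
  have dψ := hψ.differentiable (by norm_num)
  have dψb := hψb.differentiable (by norm_num)
  have h1 := fun μ α => triple_hasFD ψb (pd α ψ) (σ μ α) x (dψb x) (pd_diff ψ hψ α x)
  have h2 := fun μ α => triple_hasFD (pd α ψb) ψ (σ α μ) x (pd_diff ψb hψb α x) (dψ x)
  have hpd : ∀ β, pd β (F β) x = (Complex.I / (2 * (m : ℂ))) *
      ∑ α : Fin 4, ((triple (pd β ψb x) (σ β α) (pd α ψ x) +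
          triple (ψb x) (σ β α) (pd β (pd α ψ) x)) +
        (triple (pd β (pd α ψb) x) (σ α β) (ψ x) +
          triple (pd α ψb x) (σ α β) (pd β ψ x))) := by
    intro β
    have hFe : F β = fun y => (Complex.I / (2 * (m : ℂ))) *
      ∑ α : Fin 4, (triple (ψb y) (σ β α) (pd α ψ y) +
                    triple (pd α ψb y) (σ α β) (ψ y)) := funext (hF β)
    have hd := (HasFDerivAt.fun_sum (u := Finset.univ) (fun α _ =>
      (h1 β α).1.hasFDerivAt.fun_add (h2 β α).1.hasFDerivAt)).const_mul
        (Complex.I / (2 * (m : ℂ)))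
    rw [hFe]
    unfold pd at hd ⊢
    rw [hd.fderiv]
    simp only [ContinuousLinearMap.smul_apply, ContinuousLinearMap.sum_apply,
      ContinuousLinearMap.add_apply, smul_eq_mul]
    congr 1
    refine Finset.sum_congr rfl fun α _ => ?_
    exact congrArg₂ (· + ·) ((h1 β α).2 β) ((h2 β α).2 β)
  have z1 : ∑ β, ∑ α, triple (ψb x) (σ β α) (pd β (pd α ψ) x) = 0 :=
    skew_sum _ fun a b => by rw [hσ a b, triple_neg_mid, pd_comm ψ hψ]
  have z2 : ∑ β, ∑ α, triple (pd β (pd α ψb) x) (σ α β) (ψ x) = 0 :=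
    skew_sum _ fun a b => by rw [hσ b a, triple_neg_mid, pd_comm ψb hψb]
  have z3 : ∑ β, ∑ α, triple (pd α ψb x) (σ α β) (pd β ψ x) =
      ∑ α, ∑ β, triple (pd α ψb x) (σ α β) (pd β ψ x) := Finset.sum_comm
  have hm' : (m : ℂ) ≠ 0 := by exact_mod_cast hm
  simp only [hpd, ← Finset.mul_sum, Finset.sum_add_distrib]
  rw [z1, z2, z3]
  field_simp
  ring
end

section
/- Let N : ℕ, let g be a nonzero real number, let φ : ℝ⁴ → (Fin N → ℂ) be differentiable, let a : Fin 4 → (ℝ⁴ → Matrix (Fin N) (Fin N) ℂ), and let U : ℝ⁴ → Matrix (Fin N) (Fin N) ℂ be differentiable with (U y)ᴴ * U y = 1 for all y. Define the transformed field Φ(x) := (U x).mulVec (φ x) and the transformed gauge fields A_μ(x) := U x * a_μ(x) * (U x)ᴴ − (i/g) • (∂_μ U (x) * (U x)ᴴ). Then the covariant derivative transforms covariantly: for all x and μ, ∂_μ Φ (x) − (i*g) • (A_μ(x)).mulVec (Φ x) = (U x).mulVec ( ∂_μ φ (x) − (i*g) • (a_μ(x)).mulVec (φ x) ). -/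
open Matrix

attribute [local instance] Matrix.normedAddCommGroup Matrix.normedSpace

theorem pd_mulVec_aux {N : ℕ} (φ : (Fin 4 → ℝ) → (Fin N → ℂ)) (hφ : Differentiable ℝ φ)
    (U : (Fin 4 → ℝ) → Matrix (Fin N) (Fin N) ℂ) (hU : Differentiable ℝ U)
    (x : Fin 4 → ℝ) (μ : Fin 4) :
    pd μ (fun y => (U y).mulVec (φ y)) x =
      (pd μ U x).mulVec (φ x) + (U x).mulVec (pd μ φ x) := by
  have h1 : ∀ i j, HasFDerivAt (fun y => U y i j)
      ((ContinuousLinearMap.proj (R := ℝ) (φ := fun _ : Fin N => ℂ) j).comp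
        ((ContinuousLinearMap.proj (R := ℝ) (φ := fun _ : Fin N => Fin N → ℂ) i).comp
          (fderiv ℝ U x))) x := by
    intro i j
    have h := (hU x).hasFDerivAt
    exact hasFDerivAt_pi'.1 (hasFDerivAt_pi'.1 h i) j
  have h2 : ∀ j, HasFDerivAt (fun y => φ y j)
      ((ContinuousLinearMap.proj (R := ℝ) (φ := fun _ : Fin N => ℂ) j).comp (fderiv ℝ φ x)) x :=
    fun j => hasFDerivAt_pi'.1 (hφ x).hasFDerivAt j
  have h3 : HasFDerivAt (fun y => (U y).mulVec (φ y)) (ContinuousLinearMap.pi fun i =>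
      ∑ j, (U x i j • ((ContinuousLinearMap.proj (R := ℝ) (φ := fun _ : Fin N => ℂ) j).comp
          (fderiv ℝ φ x)) +
        φ x j • ((ContinuousLinearMap.proj (R := ℝ) (φ := fun _ : Fin N => ℂ) j).comp
        ((ContinuousLinearMap.proj (R := ℝ) (φ := fun _ : Fin N => Fin N → ℂ) i).comp
          (fderiv ℝ U x))))) x := by
    refine hasFDerivAt_pi.2 fun i => ?_
    have h4 := HasFDerivAt.fun_sum (u := Finset.univ) fun j _ => (h1 i j).mul (h2 j)
    exact h4
  unfold pd
  rw [h3.fderiv]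
  ext i
  simp only [ContinuousLinearMap.coe_pi', _root_.sum_apply,
    _root_.add_apply, _root_.smul_apply,
    ContinuousLinearMap.comp_apply, ContinuousLinearMap.proj_apply, smul_eq_mul,
    Pi.add_apply, Matrix.mulVec, dotProduct]
  rw [← Finset.sum_add_distrib]
  refine Finset.sum_congr rfl fun j _ => ?_
  rw [add_comm, mul_comm (φ x j)]
  rfl

/-- Under the local U(N) gauge transformation `Φ = U φ`,
`A_μ = U a_μ U† − (i/g)(∂_μ U) U†`, the covariant derivative transforms
covariantly (the "minimum coupling rule"). -/
theorem covariant_derivative_transforms_covariantly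
    (N : ℕ) (g : ℝ) (hg : g ≠ 0)
    (φ : (Fin 4 → ℝ) → (Fin N → ℂ)) (hφ : Differentiable ℝ φ)
    (a : Fin 4 → (Fin 4 → ℝ) → Matrix (Fin N) (Fin N) ℂ)
    (U : (Fin 4 → ℝ) → Matrix (Fin N) (Fin N) ℂ)
    (hU : Differentiable ℝ U)
    (hunit : ∀ y, (U y)ᴴ * U y = 1)
    (Φ : (Fin 4 → ℝ) → (Fin N → ℂ))
    (hΦ : ∀ x, Φ x = (U x).mulVec (φ x))
    (A : Fin 4 → (Fin 4 → ℝ) → Matrix (Fin N) (Fin N) ℂ)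
    (hA : ∀ μ x, A μ x = U x * a μ x * (U x)ᴴ -
            (Complex.I / (g : ℂ)) • (pd μ U x * (U x)ᴴ))
    (x : Fin 4 → ℝ) (μ : Fin 4) :
    pd μ Φ x - (Complex.I * (g : ℂ)) • (A μ x).mulVec (Φ x) =
      (U x).mulVec (pd μ φ x - (Complex.I * (g : ℂ)) • (a μ x).mulVec (φ x)) := by
  have hg' : (g : ℂ) ≠ 0 := by exact_mod_cast hg
  have hI : Complex.I * (g : ℂ) * (Complex.I / (g : ℂ)) = -1 := by
    field_simp
    exact Complex.I_sq
  have hΦ' : Φ = fun y => (U y).mulVec (φ y) := funext hΦ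
  have hAΦ : (A μ x).mulVec (Φ x) = (U x).mulVec ((a μ x).mulVec (φ x)) -
      (Complex.I / (g : ℂ)) • (pd μ U x).mulVec (φ x) := by
    rw [hA, hΦ, Matrix.sub_mulVec, Matrix.smul_mulVec, Matrix.mulVec_mulVec,
      Matrix.mulVec_mulVec, Matrix.mulVec_mulVec, Matrix.mul_assoc, hunit, Matrix.mul_one,
      Matrix.mul_assoc, hunit, Matrix.mul_one]
  rw [hAΦ, hΦ', pd_mulVec_aux φ hφ U hU, smul_sub, smul_smul, hI, Matrix.mulVec_sub,
    Matrix.mulVec_smul, neg_one_smul]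
  abel
end

section
/- Let η : Fin 4 → Fin 4 → ℝ be the Minkowski metric (η μ ν = 0 for μ ≠ ν, η 0 0 = 1, η k k = −1 for k = 1,2,3), let γ : Fin 4 → Matrix (Fin 4) (Fin 4) ℂ satisfy the Clifford relations γ μ * γ ν + γ ν * γ μ = (2 * η μ ν : ℂ) • 1 for all μ, ν, define σ μ ν := (Complex.I/2) • (γ μ * γ ν − γ ν * γ μ), the lowered version σ' μ ν := (η μ μ * η ν ν : ℂ) • σ μ ν, and τ μ ν := (1/3 : ℂ) • ((2 * Complex.I * η μ ν : ℂ) • 1 − σ' μ ν). Then τ is a two-sided inverse of σ in the sense that for all μ, ν ∈ Fin 4: ∑_{α ∈ Fin 4} τ μ α * σ α ν = (if μ = ν then 1 else 0 : ℂ) • 1 and ∑_{α ∈ Fin 4} σ ν α * τ α μ = (if μ = ν then 1 else 0 : ℂ) • 1. -/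
/-- The tensor `τ_{μν} = (1/3)(2i η_{μν} 𝟙 − σ_{μν})` is a two-sided inverse of
`σ^{μν}`: `τ_{μα} σ^{αν} = σ^{να} τ_{αμ} = δ_μ^ν 𝟙`. -/
theorem tau_two_sided_inverse_of_sigma
    (η : Fin 4 → Fin 4 → ℝ)
    (hη_off : ∀ μ ν, μ ≠ ν → η μ ν = 0)
    (hη_00 : η 0 0 = 1)
    (hη_kk : ∀ k : Fin 4, k ≠ 0 → η k k = -1)
    (γ : Fin 4 → Matrix (Fin 4) (Fin 4) ℂ)
    (hγ : ∀ μ ν, γ μ * γ ν + γ ν * γ μ = (2 * (η μ ν : ℂ)) • 1)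
    (σ : Fin 4 → Fin 4 → Matrix (Fin 4) (Fin 4) ℂ)
    (hσ : ∀ μ ν, σ μ ν = (Complex.I / 2) • (γ μ * γ ν - γ ν * γ μ))
    (σ' : Fin 4 → Fin 4 → Matrix (Fin 4) (Fin 4) ℂ)
    (hσ' : ∀ μ ν, σ' μ ν = ((η μ μ * η ν ν : ℝ) : ℂ) • σ μ ν)
    (τ : Fin 4 → Fin 4 → Matrix (Fin 4) (Fin 4) ℂ)
    (hτ : ∀ μ ν, τ μ ν = (1/3 : ℂ) • ((2 * Complex.I * (η μ ν : ℂ)) • 1 - σ' μ ν))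
    (μ ν : Fin 4) :
    (∑ α : Fin 4, τ μ α * σ α ν = (if μ = ν then (1 : ℂ) else 0) • 1) ∧
    (∑ α : Fin 4, σ ν α * τ α μ = (if μ = ν then (1 : ℂ) else 0) • 1) := by
  obtain ⟨e, he⟩ : ∃ e : Fin 4 → ℂ, ∀ k, e k = (η k k : ℂ) := ⟨_, fun _ => rfl⟩
  have he2 : ∀ k, e k * e k = 1 := by
    intro k
    rw [he]
    by_cases h : k = 0
    · subst h; simp [hη_00]
    · simp [hη_kk k h]
  have hη : ∀ a b, (η a b : ℂ) = if a = b then e a else 0 := by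
    intro a b
    split_ifs with h
    · subst h; exact (he a).symm
    · simp [hη_off a b h]
  have hsq : ∀ k, γ k * γ k = e k • 1 := by
    intro k
    have h := hγ k k
    rw [← he, ← two_smul ℂ, mul_smul] at h
    exact smul_right_injective _ (two_ne_zero : (2 : ℂ) ≠ 0) h
  have hs : ∀ a b, σ a b = Complex.I • (γ a * γ b - (η a b : ℂ) • 1) := by
    intro a b
    have h : γ b * γ a = (2 * (η a b : ℂ)) • 1 - γ a * γ b := by
      rw [← hγ a b]; abel
    rw [hσ, h]
    module
  have ht : ∀ a b, τ a b = (Complex.I / 3) • ((3 * (η a b : ℂ)) • 1 - (e a * e b) • (γ a * γ b)) := by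
    intro a b
    have h : e a * e b * (η a b : ℂ) = (η a b : ℂ) := by
      rw [hη]
      split_ifs with h
      · subst h; rw [he2, one_mul]
      · simp
    rw [hτ, hσ', hs]
    push_cast
    rw [← he, ← he, smul_sub Complex.I, smul_sub (e a * e b), smul_smul Complex.I (η a b : ℂ), smul_smul (e a * e b) (Complex.I * _),
      show e a * e b * (Complex.I * (η a b : ℂ)) = Complex.I * (η a b : ℂ) by
        linear_combination Complex.I * h]
    module
  have hI := Complex.I_mul_I
  have h1 : ∀ a, τ μ a * σ a ν = (-(η μ a : ℂ)) • (γ a * γ ν) + ((η μ a : ℂ) * (η a ν : ℂ)) • 1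
      + (e μ / 3) • (γ μ * γ ν) - (e μ * e a * (η a ν : ℂ) / 3) • (γ μ * γ a) := by
    intro a
    have h : γ μ * γ a * (γ a * γ ν) = e a • (γ μ * γ ν) := by
      rw [mul_assoc, ← mul_assoc (γ a), hsq]; simp
    rw [ht, hs]
    simp only [smul_mul_assoc, mul_smul_comm, sub_mul, mul_sub, one_mul, mul_one, h]
    match_scalars
    · linear_combination (η μ a : ℂ) * hI
    · linear_combination (-(e μ * e a * e a) / 3) * hI + (e μ / 3) * he2 a
    · linear_combination (-(η μ a : ℂ) * (η a ν : ℂ)) * hI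
    · linear_combination (e μ * e a * (η a ν : ℂ) / 3) * hI
  have h2 : ∀ a, σ ν a * τ a μ = (-(η a μ : ℂ)) • (γ ν * γ a) + ((η a μ : ℂ) * (η ν a : ℂ)) • 1
      + (e μ / 3) • (γ ν * γ μ) - (e μ * e a * (η ν a : ℂ) / 3) • (γ a * γ μ) := by
    intro a
    have h : γ ν * γ a * (γ a * γ μ) = e a • (γ ν * γ μ) := by
      rw [mul_assoc, ← mul_assoc (γ a), hsq]; simp
    rw [ht, hs]
    simp only [smul_mul_assoc, mul_smul_comm, sub_mul, mul_sub, one_mul, mul_one, h]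
    match_scalars
    · linear_combination (η a μ : ℂ) * hI
    · linear_combination (-(η a μ : ℂ) * (η ν a : ℂ)) * hI
    · linear_combination (-(e μ * e a * e a) / 3) * hI + (e μ / 3) * he2 a
    · linear_combination (e μ * e a * (η ν a : ℂ) / 3) * hI
  constructor
  · simp only [h1, Finset.sum_sub_distrib, Finset.sum_add_distrib, hη]
    simp only [Finset.sum_const, Finset.card_univ, Fintype.card_fin, ite_mul, mul_ite, zero_mul,
      mul_zero, mul_assoc, he2, mul_one, ite_div, zero_div, neg_ite, neg_zero, ite_smul, zero_smul,
      Finset.sum_ite_eq, Finset.sum_ite_eq', Finset.mem_univ, if_true]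
    by_cases h : μ = ν
    · subst h
      simp only [he2, if_true]
      module
    · simp only [h, if_false]
      module
  · simp only [h2, Finset.sum_sub_distrib, Finset.sum_add_distrib, hη]
    simp only [Finset.sum_const, Finset.card_univ, Fintype.card_fin, ite_mul, mul_ite, zero_mul,
      mul_zero, mul_assoc, he2, mul_one, ite_div, zero_div, neg_ite, neg_zero, ite_smul, zero_smul,
      Finset.sum_ite_eq, Finset.sum_ite_eq', Finset.mem_univ, if_true]
    by_cases h : μ = ν
    · subst h
      simp only [he2, if_true]
      module
    · simp only [h, Ne.symm h, if_false]
      module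
end

section
/- Let η : Fin 4 → Fin 4 → ℝ be the Minkowski metric (η μ ν = 0 for μ ≠ ν, η 0 0 = 1, η k k = −1 for k = 1,2,3), let γ : Fin 4 → Matrix (Fin 4) (Fin 4) ℂ satisfy the Clifford relations γ μ * γ ν + γ ν * γ μ = (2 * η μ ν : ℂ) • 1 for all μ, ν, define σ μ ν := (Complex.I/2) • (γ μ * γ ν − γ ν * γ μ), σ' μ ν := (η μ μ * η ν ν : ℂ) • σ μ ν, and τ μ ν := (1/3 : ℂ) • ((2 * Complex.I * η μ ν : ℂ) • 1 − σ' μ ν). Then ∑_{α, β ∈ Fin 4} γ α * τ α β * γ β = (−(4 * Complex.I)/3) • 1, i.e. γ^α τ_{αβ} γ^β = −(4i/3) · 𝟙. -/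
/-- Dirac algebra identity `γ^α τ_{αβ} γ^β = −(4i/3) · 𝟙`. -/
theorem gamma_tau_gamma_double_contraction
    (η : Fin 4 → Fin 4 → ℝ)
    (hη_off : ∀ μ ν, μ ≠ ν → η μ ν = 0)
    (hη_00 : η 0 0 = 1)
    (hη_kk : ∀ k : Fin 4, k ≠ 0 → η k k = -1)
    (γ : Fin 4 → Matrix (Fin 4) (Fin 4) ℂ)
    (hγ : ∀ μ ν, γ μ * γ ν + γ ν * γ μ = (2 * (η μ ν : ℂ)) • 1)
    (σ : Fin 4 → Fin 4 → Matrix (Fin 4) (Fin 4) ℂ)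
    (hσ : ∀ μ ν, σ μ ν = (Complex.I / 2) • (γ μ * γ ν - γ ν * γ μ))
    (σ' : Fin 4 → Fin 4 → Matrix (Fin 4) (Fin 4) ℂ)
    (hσ' : ∀ μ ν, σ' μ ν = ((η μ μ * η ν ν : ℝ) : ℂ) • σ μ ν)
    (τ : Fin 4 → Fin 4 → Matrix (Fin 4) (Fin 4) ℂ)
    (hτ : ∀ μ ν, τ μ ν = (1/3 : ℂ) • ((2 * Complex.I * (η μ ν : ℂ)) • 1 - σ' μ ν)) :
    ∑ α : Fin 4, ∑ β : Fin 4, γ α * τ α β * γ β =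
      (-(4 * Complex.I)/3) • (1 : Matrix (Fin 4) (Fin 4) ℂ) := by
  have hsq : ∀ μ, γ μ * γ μ = (η μ μ : ℂ) • 1 := by
    intro μ
    have h := hγ μ μ
    rw [← two_smul ℂ, mul_smul] at h
    exact smul_right_injective _ (two_ne_zero : (2 : ℂ) ≠ 0) h
  have hηη : ∀ μ, (η μ μ : ℂ) * (η μ μ : ℂ) = 1 := by
    intro μ
    by_cases h : μ = 0
    · subst h; simp [hη_00]
    · simp [hη_kk μ h]
  have key : ∀ α β, γ α * τ α β * γ β =
      (if α = β then 2 * Complex.I / 3 else -Complex.I / 3 : ℂ) •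
        (1 : Matrix (Fin 4) (Fin 4) ℂ) := by
    intro α β
    by_cases h : α = β
    · subst h
      rw [hτ, hσ', hσ, sub_self, smul_zero, smul_zero, sub_zero, if_pos rfl]
      simp only [mul_smul_comm, smul_mul_assoc, mul_one, hsq, smul_smul]
      congr 1
      linear_combination (2 * Complex.I / 3) * hηη α
    · have hc : γ β * γ α = - (γ α * γ β) := by
        have h1 := hγ α β
        rw [hη_off α β h] at h1
        simp only [Complex.ofReal_zero, mul_zero, zero_smul] at h1
        exact eq_neg_of_add_eq_zero_right h1
      rw [hτ, hσ', hσ, hc, hη_off α β h, if_neg h, sub_neg_eq_add, ← two_smul ℂ]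
      have h4 : γ α * (γ α * γ β) * γ β = ((η α α : ℂ) * (η β β : ℂ)) • 1 := by
        rw [← mul_assoc, hsq, mul_assoc, hsq]
        simp only [smul_mul_assoc, mul_smul_comm, mul_one, smul_smul, mul_comm]
      simp only [Complex.ofReal_zero, mul_zero, zero_smul, zero_sub, smul_neg, mul_neg, neg_mul,
        mul_smul_comm, smul_mul_assoc, h4, smul_smul, ← neg_smul]
      congr 1
      push_cast
      linear_combination (-Complex.I / 3) * (η β β : ℂ) * (η β β : ℂ) * hηη α
        + (-Complex.I / 3) * hηη β
  simp only [key, ← Finset.sum_smul]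
  congr 1
  simp [Fin.sum_univ_four]
  ring
end

section
/- Let η : Fin 4 → Fin 4 → ℝ be the Minkowski metric (η μ ν = 0 for μ ≠ ν, η 0 0 = 1, η k k = −1 for k = 1,2,3), let γ : Fin 4 → Matrix (Fin 4) (Fin 4) ℂ satisfy the Clifford relations γ μ * γ ν + γ ν * γ μ = (2 * η μ ν : ℂ) • 1 for all μ, ν, and define σ μ ν := (Complex.I/2) • (γ μ * γ ν − γ ν * γ μ) and the lowered Dirac matrices γ' μ := (η μ μ : ℂ) • γ μ. Let m ≠ 0 be a real number. Then for all row vectors ū, c_α : Fin 4 → ℂ (α ∈ Fin 4) and column vectors u, b_β : Fin 4 → ℂ (β ∈ Fin 4), the following algebraic identity holds, where ⟨r, M, v⟩ := ∑_{j,k} r j * M j k * v k and r ⬝ v := ∑_j r j * v j and γ^α with raised index is γ α: ∑_{α,β} ⟨ c_α + (Complex.I*m/6) • (ū ᵥ* γ' α), (1/(Complex.I*m)) • σ α β, b_β − (Complex.I*m/6) • ((γ' β).mulVec u) ⟩ − (4*m/3) * (ū ⬝ u) = (Complex.I/2) * ∑_α ( ⟨ū, γ α, b_α⟩ − ⟨c_α,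 γ α, u⟩ ) − (Complex.I/m) * ∑_{α,β} ⟨c_α, σ α β, b_β⟩ − m * (ū ⬝ u), where ū ᵥ* γ' α denotes the row-vector–matrix product. -/
open Matrix

/-- The scalar `u ⬝ v = ∑_j u j * v j`. -/
noncomputable def dotc (u v : Fin 4 → ℂ) : ℂ := ∑ j : Fin 4, u j * v j

theorem triple_eq (r : Fin 4 → ℂ) (M : Matrix (Fin 4) (Fin 4) ℂ) (v : Fin 4 → ℂ) :
    triple r M v = r ⬝ᵥ (M *ᵥ v) := by
  simp only [triple, dotProduct, mulVec, Finset.mul_sum, mul_assoc]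

theorem triple_sum {ι : Type} (s : Finset ι) (r : Fin 4 → ℂ)
    (M : ι → Matrix (Fin 4) (Fin 4) ℂ) (v : Fin 4 → ℂ) :
    ∑ i ∈ s, triple r (M i) v = triple r (∑ i ∈ s, M i) v := by
  simp only [triple_eq, sum_mulVec, dotProduct_sum]

theorem triple_smul (r : Fin 4 → ℂ) (a : ℂ)
    (M : Matrix (Fin 4) (Fin 4) ℂ) (v : Fin 4 → ℂ) :
    triple r (a • M) v = a * triple r M v := by
  simp only [triple_eq, smul_mulVec, dotProduct_smul, smul_eq_mul]

theorem triple_expand (r s v w : Fin 4 → ℂ) (k l : ℂ) (P M Q : Matrix (Fin 4) (Fin 4) ℂ) :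
    triple (r + k • (s ᵥ* P)) (l • M) (v - k • (Q *ᵥ w)) =
      l * triple r M v - l * k * triple r (M * Q) w + l * k * triple s (P * M) v
        - l * k * k * triple s (P * M * Q) w := by
  simp only [triple_eq, smul_mulVec, dotProduct_smul, smul_eq_mul, mulVec_sub, mulVec_smul,
    add_dotProduct, smul_dotProduct, dotProduct_sub, ← mulVec_mulVec, ← dotProduct_mulVec]
  ring

/-- Pointwise algebraic identity showing that the regularized Dirac Lagrangian
`L_D′ = (i/2)(ψ̄ γ^α ∂_α ψ − ∂_α ψ̄ γ^α ψ) − (i/m) ∂_α ψ̄ σ^{αβ} ∂_β ψ − m ψ̄ ψ`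
can be written in the factored form
`(∂_α ψ̄ + (im/6) ψ̄ γ_α)(σ^{αβ}/(im))(∂_β ψ − (im/6) γ_β ψ) − (4m/3) ψ̄ ψ`. -/
theorem regularized_dirac_lagrangian_factored_form
    (η : Fin 4 → Fin 4 → ℝ)
    (hη_off : ∀ μ ν, μ ≠ ν → η μ ν = 0)
    (hη_00 : η 0 0 = 1)
    (hη_kk : ∀ k : Fin 4, k ≠ 0 → η k k = -1)
    (γ : Fin 4 → Matrix (Fin 4) (Fin 4) ℂ)
    (hγ : ∀ μ ν, γ μ * γ ν + γ ν * γ μ = (2 * (η μ ν : ℂ)) • 1)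
    (σ : Fin 4 → Fin 4 → Matrix (Fin 4) (Fin 4) ℂ)
    (hσ : ∀ μ ν, σ μ ν = (Complex.I / 2) • (γ μ * γ ν - γ ν * γ μ))
    (γ' : Fin 4 → Matrix (Fin 4) (Fin 4) ℂ)
    (hγ' : ∀ μ, γ' μ = ((η μ μ : ℂ)) • γ μ)
    (m : ℝ) (hm : m ≠ 0)
    (ub u : Fin 4 → ℂ) (c b : Fin 4 → (Fin 4 → ℂ)) :
    (∑ α : Fin 4, ∑ β : Fin 4,
        triple (c α + (Complex.I * (m : ℂ) / 6) • (ub ᵥ* γ' α))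
               ((1 / (Complex.I * (m : ℂ))) • σ α β)
               (b β - (Complex.I * (m : ℂ) / 6) • ((γ' β).mulVec u)))
      - (4 * (m : ℂ) / 3) * dotc ub u
    = (Complex.I / 2) * (∑ α : Fin 4, (triple ub (γ α) (b α) - triple (c α) (γ α) u))
      - (Complex.I / (m : ℂ)) *
          (∑ α : Fin 4, ∑ β : Fin 4, triple (c α) (σ α β) (b β))
      - (m : ℂ) * dotc ub u := by
  have hsq : ∀ μ, (η μ μ : ℂ) * (η μ μ : ℂ) = 1 := by
    intro μ
    by_cases h : μ = 0
    · subst h; simp [hη_00]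
    · simp [hη_kk μ h]
  have hgg : ∀ μ, γ μ * γ μ = (η μ μ : ℂ) • (1 : Matrix (Fin 4) (Fin 4) ℂ) := by
    intro μ
    have h := hγ μ μ
    rw [← two_smul ℂ (γ μ * γ μ), mul_smul] at h
    exact smul_right_injective _ (two_ne_zero (α := ℂ)) h
  have h1 : ∀ μ, γ μ * γ' μ = 1 := by
    intro μ
    rw [hγ', mul_smul_comm, hgg, smul_smul, hsq, one_smul]
  have h2 : ∀ μ, γ' μ * γ μ = 1 := by
    intro μ
    rw [hγ', smul_mul_assoc, hgg, smul_smul, hsq, one_smul]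
  have hs : ∀ μ ν, σ μ ν = Complex.I • (γ μ * γ ν)
      - (Complex.I * (η μ ν : ℂ)) • (1 : Matrix (Fin 4) (Fin 4) ℂ) := by
    intro μ ν
    have h : γ ν * γ μ = (2 * (η μ ν : ℂ)) • 1 - γ μ * γ ν := by
      rw [← hγ μ ν]; abel
    rw [hσ, h]
    module
  have hη1 : ∀ α, ∑ β, (Complex.I * (η α β : ℂ)) • γ' β = Complex.I • γ α := by
    intro α
    rw [Finset.sum_eq_single α]
    · rw [hγ', smul_smul, mul_assoc, hsq, mul_one]
    · intro β _ hb
      simp [hη_off α β hb.symm]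
    · simp
  have hη2 : ∀ β, ∑ α, (Complex.I * (η α β : ℂ)) • γ' α = Complex.I • γ β := by
    intro β
    rw [Finset.sum_eq_single β]
    · rw [hγ', smul_smul, mul_assoc, hsq, mul_one]
    · intro α _ hb
      simp [hη_off α β hb]
    · simp
  have hA : ∀ α, ∑ β, σ α β * γ' β = (3 * Complex.I) • γ α := by
    intro α
    simp only [hs, sub_mul, smul_mul_assoc, mul_assoc, h1, one_mul, mul_one,
      Finset.sum_sub_distrib]
    rw [hη1]
    simp only [Finset.sum_const, Finset.card_univ, Fintype.card_fin]
    module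
  have hB : ∀ β, ∑ α, γ' α * σ α β = (3 * Complex.I) • γ β := by
    intro β
    simp only [hs, mul_sub, mul_smul_comm, ← mul_assoc, h2, one_mul, mul_one,
      Finset.sum_sub_distrib]
    rw [hη2]
    simp only [Finset.sum_const, Finset.card_univ, Fintype.card_fin]
    module
  have hC : ∑ α, ∑ β, triple ub (γ' α * σ α β * γ' β) u = 12 * Complex.I * dotc ub u := by
    have : ∑ α, ∑ β, γ' α * σ α β * γ' β
        = (12 * Complex.I) • (1 : Matrix (Fin 4) (Fin 4) ℂ) := by
      simp only [mul_assoc, ← Finset.mul_sum, hA, mul_smul_comm, h2]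
      simp only [Finset.sum_const, Finset.card_univ, Fintype.card_fin]
      module
    simp only [triple_sum]
    rw [this, triple_smul, triple_eq, one_mulVec]
    rfl
  have hD : ∑ α, ∑ β, triple (c α) (σ α β * γ' β) u
      = 3 * Complex.I * ∑ α, triple (c α) (γ α) u := by
    simp only [triple_sum, hA, triple_smul, Finset.mul_sum]
  have hE : ∑ α, ∑ β, triple ub (γ' α * σ α β) (b β)
      = 3 * Complex.I * ∑ α, triple ub (γ α) (b α) := by
    rw [Finset.sum_comm]
    simp only [triple_sum, hB, triple_smul, Finset.mul_sum]
  have hm' : (m : ℂ) ≠ 0 := by exact_mod_cast hm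
  simp only [triple_expand, Finset.sum_sub_distrib, Finset.sum_add_distrib, ← Finset.mul_sum]
  rw [hC, hD, hE]
  have hI : (1 / (Complex.I * (m : ℂ))) = - Complex.I / m := by
    field_simp
    simp
  have hk : (1 / (Complex.I * (m : ℂ))) * (Complex.I * (m : ℂ) / 6) = 1 / 6 := by
    have := Complex.I_ne_zero
    field_simp
  rw [hk, hI]
  linear_combination (-(m : ℂ) / 3 * dotc ub u) * Complex.I_sq
end

section
/- Let η : Fin 4 → Fin 4 → ℝ be the Minkowski metric (η μ ν = 0 for μ ≠ ν, η 0 0 = 1, η k k = −1 for k = 1,2,3), let γ : Fin 4 → Matrix (Fin 4) (Fin 4) ℂ satisfy the Clifford relations γ μ * γ ν + γ ν * γ μ = (2 * η μ ν : ℂ) • 1 for all μ, ν, define σ μ ν := (Complex.I/2) • (γ μ * γ ν − γ ν * γ μ), σ' μ ν := (η μ μ * η ν ν : ℂ) • σ μ ν, and τ μ ν := (1/3 : ℂ) • ((2 * Complex.I * η μ ν : ℂ) • 1 − σ' μ ν). Let m ≠ 0 be a real number. For any row vector ψ̄ : Fin 4 → ℂ and any family of row vectors w : Fin 4 → (Fin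 4 → ℂ), define π̄^μ := (Complex.I/2) • (ψ̄ ᵥ* γ μ) − (Complex.I/m) • ∑_α (w α) ᵥ* (σ α μ). Then the relation can be inverted: for every ν ∈ Fin 4, (Complex.I*m) • ∑_α ( (π̄^α − (Complex.I/2) • (ψ̄ ᵥ* γ α)) ᵥ* (τ α ν) ) = w ν, where r ᵥ* M denotes the row-vector–matrix product. -/
open Matrix

/-- Inversion of the Dirac canonical momenta: if
`π̄^μ = (i/2) ψ̄ γ^μ − (i/m) w_α σ^{αμ}`, then
`i m (π̄^α − (i/2) ψ̄ γ^α) τ_{αν} = w_ν`. -/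
theorem dirac_momenta_inversion
    (η : Fin 4 → Fin 4 → ℝ)
    (hη_off : ∀ μ ν, μ ≠ ν → η μ ν = 0)
    (hη_00 : η 0 0 = 1)
    (hη_kk : ∀ k : Fin 4, k ≠ 0 → η k k = -1)
    (γ : Fin 4 → Matrix (Fin 4) (Fin 4) ℂ)
    (hγ : ∀ μ ν, γ μ * γ ν + γ ν * γ μ = (2 * (η μ ν : ℂ)) • 1)
    (σ : Fin 4 → Fin 4 → Matrix (Fin 4) (Fin 4) ℂ)
    (hσ : ∀ μ ν, σ μ ν = (Complex.I / 2) • (γ μ * γ ν - γ ν * γ μ))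
    (σ' : Fin 4 → Fin 4 → Matrix (Fin 4) (Fin 4) ℂ)
    (hσ' : ∀ μ ν, σ' μ ν = ((η μ μ * η ν ν : ℝ) : ℂ) • σ μ ν)
    (τ : Fin 4 → Fin 4 → Matrix (Fin 4) (Fin 4) ℂ)
    (hτ : ∀ μ ν, τ μ ν = (1/3 : ℂ) • ((2 * Complex.I * (η μ ν : ℂ)) • 1 - σ' μ ν))
    (m : ℝ) (hm : m ≠ 0)
    (ψb : Fin 4 → ℂ) (w : Fin 4 → (Fin 4 → ℂ))
    (πb : Fin 4 → (Fin 4 → ℂ))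
    (hπ : ∀ μ, πb μ = (Complex.I / 2) • (ψb ᵥ* γ μ) -
            (Complex.I / (m : ℂ)) • ∑ α : Fin 4, (w α) ᵥ* (σ α μ))
    (ν : Fin 4) :
    (Complex.I * (m : ℂ)) •
      ∑ α : Fin 4, ((πb α - (Complex.I / 2) • (ψb ᵥ* γ α)) ᵥ* (τ α ν)) = w ν := by
  have he : ∀ μ, (η μ μ : ℂ) * (η μ μ : ℂ) = 1 := by
    intro μ
    by_cases h : μ = 0
    · subst h; simp [hη_00]
    · simp [hη_kk μ h]
  have hsq : ∀ μ, γ μ * γ μ = (η μ μ : ℂ) • (1 : Matrix (Fin 4) (Fin 4) ℂ) := by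
    intro μ
    have h := hγ μ μ
    rw [← two_smul ℂ, mul_smul] at h
    exact smul_right_injective _ (two_ne_zero : (2 : ℂ) ≠ 0) h
  have hs0 : ∀ μ, σ μ μ = 0 := by intro μ; simp [hσ]
  have hs1 : ∀ μ ν, μ ≠ ν → σ μ ν = Complex.I • (γ μ * γ ν) := by
    intro μ ν h
    have h1 := hγ μ ν
    rw [hη_off μ ν h] at h1
    simp only [Complex.ofReal_zero, mul_zero, zero_smul] at h1
    rw [hσ, ← neg_eq_of_add_eq_zero_right h1, sub_neg_eq_add, ← two_smul ℂ, smul_smul]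
    congr 1
    ring
  have hterm : ∀ β α, σ β α * τ α ν = (if α = β then (0 : ℂ) else if α = ν then -(2/3) else 1/3) •
      ((η ν ν : ℂ) • (γ β * γ ν)) := by
    intro β α
    by_cases h1 : α = β
    · subst h1; simp [hs0]
    · rw [if_neg h1, hs1 β α (Ne.symm h1), hτ, hσ']
      by_cases h2 : α = ν
      · subst h2
        rw [if_pos rfl, hs0]
        simp only [smul_zero, sub_zero, mul_smul_comm, smul_mul_assoc, mul_one, smul_smul]
        congr 1
        linear_combination (2/3 * (η α α : ℂ)) * Complex.I_mul_I
      · rw [if_neg h2, hs1 α ν h2, hη_off α ν h2]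
        have h3 : γ β * γ α * (γ α * γ ν) = (η α α : ℂ) • (γ β * γ ν) := by
          rw [mul_assoc, ← mul_assoc (γ α), hsq]
          simp
        simp only [Complex.ofReal_zero, mul_zero, zero_smul, zero_sub, smul_neg, mul_neg,
          mul_smul_comm, smul_mul_assoc, smul_smul, h3, ← neg_smul]
        congr 1
        push_cast
        linear_combination (-(1/3) * (η α α : ℂ) * (η α α : ℂ) * (η ν ν : ℂ)) * Complex.I_mul_I
          + (1/3 * (η ν ν : ℂ)) * he α
  have hsum : ∀ β, ∑ α, σ β α * τ α ν = if β = ν then 1 else 0 := by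
    intro β
    simp only [hterm, ← Finset.sum_smul]
    by_cases h : β = ν
    · subst h
      rw [if_pos rfl, hsq, smul_smul (η β β : ℂ), he, one_smul]
      have : ∑ α : Fin 4, (if α = β then (0 : ℂ) else if α = β then -(2/3) else 1/3) = 1 := by
        fin_cases β <;> simp [Fin.sum_univ_four] <;> norm_num
      rw [this, one_smul]
    · rw [if_neg h]
      have : ∑ α : Fin 4, (if α = β then (0 : ℂ) else if α = ν then -(2/3) else 1/3) = 0 := by
        clear * - h
        fin_cases β <;> fin_cases ν <;> simp [Fin.sum_univ_four] at h ⊢ <;> norm_num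
      rw [this, zero_smul]
  have hmC : (m : ℂ) ≠ 0 := by exact_mod_cast hm
  have hp : ∀ α, (πb α - (Complex.I / 2) • (ψb ᵥ* γ α)) ᵥ* (τ α ν)
      = (-(Complex.I / (m : ℂ))) • ∑ β, (w β) ᵥ* (σ β α * τ α ν) := by
    intro α
    rw [hπ, sub_sub_cancel_left, ← neg_smul, Matrix.smul_vecMul, Matrix.sum_vecMul]
    simp only [Matrix.vecMul_vecMul]
  simp only [hp]
  rw [← Finset.smul_sum, smul_smul, Finset.sum_comm]
  have hc : Complex.I * (m : ℂ) * -(Complex.I / (m : ℂ)) = 1 := by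
    field_simp
    simp
  rw [hc, one_smul]
  simp only [← Matrix.vecMul_sum, hsum]
  rw [Finset.sum_eq_single ν]
  · simp
  · intro b _ hb; simp [hb]
  · simp
end
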